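/- Let φ be the indicator of the Euclidean ball of radius R > 0 in ℝ^d. Then for n ≥ 3, φ^{⋆n}(0) = d · 2^{d(n/2-1)} · Γ(d/2+1)^{n-2} · ∫_0^∞ x^{-1-d(n/2-1)} (J_{d/2}(x))^n dx, when R = R(d) = π^{-1/2} Γ(d/2+1)^{1/d} is chosen so the ball has unit volume. -/

import Mathlib

open MeasureTheory Real

noncomputable def conv {d : ℕ} (f g : EuclideanSpace ℝ (Fin d) → ℝ)
    (x : EuclideanSpace ℝ (Fin d)) : ℝ := ∫ u, f (x - u) * g u

/-- `iterConv f n` is the `(n+1)`-fold self-convolution of `f`, so `iterConv f 0 = f`. -/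
noncomputable def iterConv {d : ℕ} (f : EuclideanSpace ℝ (Fin d) → ℝ) :
    ℕ → EuclideanSpace ℝ (Fin d) → ℝ
  | 0 => f
  | n + 1 => conv (iterConv f n) f

/-- The Bessel function of the first kind of order `ν`, via its power series (for `x ≥ 0`). -/
noncomputable def besselJ (ν x : ℝ) : ℝ :=
  ∑' m : ℕ, ((-1 : ℝ) ^ m / ((Nat.factorial m : ℝ) * Real.Gamma ((m : ℝ) + ν + 1))) *
    (x / 2) ^ (2 * (m : ℝ) + ν)

open Module Set Metric
open scoped ENNReal FourierTransform InnerProductSpace SchwartzMap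

/-!
A bounded integrable function `f` also lies in `L²`, so by Plancherel `(𝓕 f) ^ n` is integrable for
`n ≥ 2`. As `f^{⋆n}` is then continuous, Fourier inversion at the origin gives
`f^{⋆n}(0) = ∫ (𝓕 f) ^ n`.

For the indicator of a ball, expand the cosine in `𝓕 f` as a power series. Each term is the integral
over the ball of an even power of a linear form; in polar coordinates the same spherical factor
occurs in the corresponding Gaussian moment, which is a product of one-dimensional integrals. The
resulting series is that of `besselJ`. Polar coordinates and the substitution `x = 2πR‖ξ‖` turn
`∫ (𝓕 f) ^ n` into the radial Bessel integral.
-/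

section Fourier

variable {V F : Type*} [NormedAddCommGroup V] [InnerProductSpace ℝ V] [FiniteDimensional ℝ V]
  [MeasurableSpace V] [BorelSpace V] [NormedAddCommGroup F]

theorem continuous_fourier_of_integrable [NormedSpace ℂ F] {f : V → F} (hf : Integrable f) :
    Continuous (𝓕 f) :=
  VectorFourier.fourierIntegral_continuous continuous_fourierChar (by exact continuous_inner) hf

theorem norm_fourier_le_integral_norm [NormedSpace ℂ F] (f : V → F) (ξ : V) :
    ‖𝓕 f ξ‖ ≤ ∫ x, ‖f x‖ :=
  VectorFourier.norm_fourierIntegral_le_integral_norm fourierChar volume (innerₗ V) f ξ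

theorem memLp_top_fourier [NormedSpace ℂ F] {f : V → F} (hf : Integrable f) :
    MemLp (𝓕 f) ∞ :=
  memLp_top_of_bound (continuous_fourier_of_integrable hf).aestronglyMeasurable _
    (.of_forall (norm_fourier_le_integral_norm f))

open scoped ContDiff in
theorem ae_eq_of_integral_schwartz_smul_eq [NormedSpace ℂ F] [CompleteSpace F] {f g : V → F}
    (hf : LocallyIntegrable f) (hg : LocallyIntegrable g)
    (h : ∀ ψ : 𝓢(V, ℂ), ∫ x, ψ x • f x = ∫ x, ψ x • g x) :
    f =ᵐ[volume] g := by
  refine ae_eq_of_integral_contDiff_smul_eq hf hg fun ψ hψ hψc ↦ ?_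
  have hψc' : HasCompactSupport (Complex.ofRealCLM ∘ ψ) := hψc.comp_left rfl
  have hψ' : ContDiff ℝ ∞ (Complex.ofRealCLM ∘ ψ) := by fun_prop
  simpa using h (hψc'.toSchwartzMap hψ')

theorem fourier_toLp_ae_eq [InnerProductSpace ℂ F] [CompleteSpace F] {f : V → F}
    (hf : Integrable f) (hf2 : MemLp f 2) :
    (𝓕 (hf2.toLp f) : Lp F 2 (volume : Measure V)) =ᵐ[volume] 𝓕 f := by
  refine ae_eq_of_integral_schwartz_smul_eq ((Lp.memLp _).locallyIntegrable one_le_two)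
    ((continuous_fourier_of_integrable hf).locallyIntegrable) fun ψ ↦ ?_
  calc ∫ ξ, ψ ξ • (𝓕 (hf2.toLp f) : Lp F 2 (volume : Measure V)) ξ
      = ∫ x, (𝓕 ψ) x • hf2.toLp f x := by
        rw [← Lp.toTemperedDistribution_apply, ← Lp.fourier_toTemperedDistribution_eq,
          TemperedDistribution.fourier_apply, Lp.toTemperedDistribution_apply]
    _ = ∫ x, 𝓕 (ψ : V → ℂ) x • f x := by
        rw [SchwartzMap.fourier_coe]
        exact integral_congr_ae (hf2.coeFn_toLp.mono fun x hx ↦ by simp only [hx])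
    _ = ∫ ξ, ψ ξ • 𝓕 f ξ := by
        have h := VectorFourier.integral_fourierIntegral_smul_eq_flip (L := innerₗ V)
          continuous_fourierChar continuous_inner (ψ.integrable (μ := volume)) hf
        rw [flip_innerₗ] at h
        exact h

theorem memLp_two_fourier [InnerProductSpace ℂ F] [CompleteSpace F] {f : V → F}
    (hf : Integrable f) (hf2 : MemLp f 2) : MemLp (𝓕 f) 2 :=
  (memLp_congr_ae (fourier_toLp_ae_eq hf hf2)).1 (Lp.memLp _)

theorem integrable_fourier_pow {f : V → ℂ} (hf : Integrable f) (hf2 : MemLp f 2) (k : ℕ) :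
    Integrable (𝓕 f ^ (k + 2)) := by
  induction k with
  | zero =>
    have h := memLp_two_fourier hf hf2
    simpa only [zero_add, pow_two] using h.integrable_mul h
  | succ k ih => exact (memLp_one_iff_integrable.2 ih).integrable_mul (memLp_top_fourier hf)

theorem fourier_ofReal_of_even {f : V → ℝ} (hf : Integrable f) (hf_even : ∀ x, f (-x) = f x)
    (ξ : V) :
    𝓕 (fun x ↦ (f x : ℂ)) ξ = ((∫ x, cos (2 * π * ⟪x, ξ⟫_ℝ) * f x : ℝ) : ℂ) := by
  have integrable_mul {u : ℝ → ℝ} (hu : Continuous u) (hu1 : ∀ t, |u t| ≤ 1) :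
      Integrable fun x ↦ u (2 * π * ⟪x, ξ⟫_ℝ) * f x :=
    hf.bdd_mul (Continuous.aestronglyMeasurable (by fun_prop)) (.of_forall fun x ↦ hu1 _)
  have sin_part : ∫ x, sin (2 * π * ⟪x, ξ⟫_ℝ) * f x = 0 := by
    rw [← self_eq_neg, ← integral_neg, ← integral_neg_eq_self]
    simp only [inner_neg_left, mul_neg, sin_neg, hf_even, neg_mul]
  have euler (x : V) : Complex.exp (((-2 * π * ⟪x, ξ⟫_ℝ : ℝ) : ℂ) * Complex.I) • (f x : ℂ) =
      ((cos (2 * π * ⟪x, ξ⟫_ℝ) * f x : ℝ) : ℂ) -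
        ((sin (2 * π * ⟪x, ξ⟫_ℝ) * f x : ℝ) : ℂ) * Complex.I := by
    rw [Complex.exp_mul_I, ← Complex.ofReal_cos, ← Complex.ofReal_sin, neg_mul, neg_mul, cos_neg,
      sin_neg, smul_eq_mul]
    push_cast
    ring
  rw [Real.fourier_eq', integral_congr_ae (.of_forall euler),
    integral_sub (integrable_mul continuous_cos abs_cos_le_one).ofReal
      ((integrable_mul continuous_sin abs_sin_le_one).ofReal.mul_const _), integral_mul_const,
    integral_complex_ofReal, integral_complex_ofReal, sin_part, Complex.ofReal_zero, zero_mul,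
    sub_zero]

end Fourier

section Convolution

variable {d : ℕ} {f g : EuclideanSpace ℝ (Fin d) → ℝ}

theorem conv_eq_convolution (f g : EuclideanSpace ℝ (Fin d) → ℝ) :
    conv f g = convolution g f (ContinuousLinearMap.mul ℝ ℝ) volume := by
  ext x
  simp [conv, convolution, mul_comm]

theorem integrable_conv (hf : Integrable f) (hg : Integrable g) : Integrable (conv f g) := by
  rw [conv_eq_convolution]
  exact hg.integrable_convolution _ hf

theorem continuous_conv {p q : ℝ≥0∞} [p.HolderConjugate q] (hp : p ≠ ∞) (hf : MemLp f p)
    (hg : MemLp g q) : Continuous (conv f g) := by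
  have : Fact (1 ≤ p) := ⟨ENNReal.HolderConjugate.one_le p q⟩
  have : Fact (p ≠ ∞) := ⟨hp⟩
  have : Fact (1 ≤ q) := ⟨ENNReal.HolderConjugate.one_le q p⟩
  have hf' : MemLp (fun u ↦ f (-u)) p :=
    hf.comp_measurePreserving (Measure.measurePreserving_neg volume)
  have translate_ae (x : EuclideanSpace ℝ (Fin d)) :
      DomAddAct.mk (-x) +ᵥ hf'.toLp =ᵐ[volume] fun u ↦ f (x - u) := by
    rw [DomAddAct.mk_vadd_toLp]
    refine (MemLp.coeFn_toLp _).trans (.of_forall fun u ↦ ?_)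
    simp only [vadd_eq_add, neg_add_eq_sub, neg_sub]
  have conv_eq_pairing (x) : conv f g x = (ContinuousLinearMap.mul ℝ ℝ).lpPairing volume p q
      (DomAddAct.mk (-x) +ᵥ hf'.toLp) hg.toLp := by
    rw [ContinuousLinearMap.lpPairing_eq_integral]
    refine integral_congr_ae ?_
    filter_upwards [translate_ae x, hg.coeFn_toLp] with u hfu hgu
    rw [hfu, hgu, ContinuousLinearMap.mul_apply']
  rw [funext conv_eq_pairing]
  have : Continuous fun x : EuclideanSpace ℝ (Fin d) ↦ DomAddAct.mk (-x) +ᵥ hf'.toLp := by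
    fun_prop
  exact (((ContinuousLinearMap.mul ℝ ℝ).lpPairing volume p q).flip hg.toLp).continuous.comp this

theorem fourier_conv (hf : Integrable f) (hg : Integrable g) :
    𝓕 (fun x ↦ (conv f g x : ℂ)) = 𝓕 (fun x ↦ (f x : ℂ)) * 𝓕 (fun x ↦ (g x : ℂ)) := by
  have ofReal_conv : (fun x ↦ (conv f g x : ℂ)) = convolution (fun x ↦ (g x : ℂ))
      (fun x ↦ (f x : ℂ)) (ContinuousLinearMap.mul ℂ ℂ) volume := by
    ext x
    simp only [conv, convolution, ← integral_complex_ofReal, Complex.ofReal_mul,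
      ContinuousLinearMap.mul_apply', mul_comm]
  ext ξ
  rw [ofReal_conv, Real.fourier_mul_convolution_eq (f₁ := fun x ↦ (g x : ℂ))
    (f₂ := fun x ↦ (f x : ℂ)) hg.ofReal hf.ofReal, mul_comm, Pi.mul_apply]

theorem integrable_iterConv (hf : Integrable f) (k : ℕ) : Integrable (iterConv f k) := by
  induction k with
  | zero => exact hf
  | succ k ih => exact integrable_conv ih hf

theorem fourier_iterConv (hf : Integrable f) (k : ℕ) :
    𝓕 (fun x ↦ (iterConv f k x : ℂ)) = 𝓕 (fun x ↦ (f x : ℂ)) ^ (k + 1) := by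
  induction k with
  | zero => simp only [iterConv, zero_add, pow_one]
  | succ k ih => rw [iterConv, fourier_conv (integrable_iterConv hf k) hf, ih, ← pow_succ]

theorem fourierInv_fourier_pow_eq_iterConv (hf : Integrable f) (hf' : MemLp f ∞) (k : ℕ) :
    𝓕⁻ (𝓕 (fun x ↦ (f x : ℂ)) ^ (k + 2)) = fun x ↦ (iterConv f (k + 1) x : ℂ) := by
  have hf2 : MemLp f 2 := (memLp_two_iff_integrable_sq hf.1).2 <| by
    simpa only [sq] using! (memLp_one_iff_integrable.2 hf).integrable_mul hf'
  have hcont : Continuous (iterConv f (k + 1)) :=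
    continuous_conv (p := 1) ENNReal.one_ne_top
      (memLp_one_iff_integrable.2 (integrable_iterConv hf k)) hf'
  rw [← fourier_iterConv hf]
  refine Continuous.fourierInv_fourier_eq (by fun_prop) (integrable_iterConv hf (k + 1)).ofReal ?_
  rw [fourier_iterConv hf]
  exact integrable_fourier_pow hf.ofReal hf2.ofReal k

theorem iterConv_zero_eq_integral_fourier_pow (hf : Integrable f) (hf' : MemLp f ∞) (k : ℕ) :
    (iterConv f (k + 1) 0 : ℂ) = ∫ ξ, 𝓕 (fun x ↦ (f x : ℂ)) ξ ^ (k + 2) := by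
  simpa [Real.fourierInv_eq'] using (congrFun (fourierInv_fourier_pow_eq_iterConv hf hf' k) 0).symm

end Convolution

section Homogeneous

variable {E F : Type*} [NormedAddCommGroup E] [NormedSpace ℝ E] [FiniteDimensional ℝ E]
  [Nontrivial E] [MeasurableSpace E] [BorelSpace E] [NormedAddCommGroup F] [NormedSpace ℝ F]
  (μ : Measure E) [μ.IsAddHaarMeasure] {g : E → F} {k : ℕ}

theorem integral_fun_norm_smul_homogeneous (hg : ∀ r > (0 : ℝ), ∀ x, g (r • x) = r ^ k • g x)
    (h : ℝ → ℝ) :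
    ∫ x, h ‖x‖ • g x ∂μ =
      (∫ r in Ioi (0 : ℝ), r ^ (k + finrank ℝ E - 1) * h r) •
        ∫ ω : sphere (0 : E) 1, g ω ∂μ.toSphere := by
  have polar (x : ({0}ᶜ : Set E)) :
      h ‖x.1‖ • g x = (‖x.1‖ ^ k * h ‖x.1‖) • g (‖x.1‖⁻¹ • x.1) := by
    have hx : 0 < ‖x.1‖ := norm_pos_iff.2 x.2
    rw [mul_comm, mul_smul, ← hg _ hx, smul_inv_smul₀ hx.ne']
  calc
    ∫ x, h ‖x‖ • g x ∂μ
        = ∫ x : ({0}ᶜ : Set E), (‖x.1‖ ^ k * h ‖x.1‖) • g (‖x.1‖⁻¹ • x.1) ∂μ.comap (↑) := by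
      simp_rw [← polar]
      rw [integral_subtype_comap (measurableSet_singleton _).compl fun x ↦ h ‖x‖ • g x,
        restrict_compl_singleton]
    _ = ∫ p : sphere (0 : E) 1 × Ioi (0 : ℝ), ((p.2 : ℝ) ^ k * h p.2) • g p.1
          ∂μ.toSphere.prod (.volumeIoiPow (finrank ℝ E - 1)) := by
      rw [← μ.measurePreserving_homeomorphUnitSphereProd.integral_comp
        (Homeomorph.measurableEmbedding _)]
      simp only [homeomorphUnitSphereProd_apply_snd_coe, homeomorphUnitSphereProd_apply_fst_coe]
    _ = (∫ r : Ioi (0 : ℝ), (r : ℝ) ^ k * h r ∂.volumeIoiPow (finrank ℝ E - 1)) •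
          ∫ ω : sphere (0 : E) 1, g ω ∂μ.toSphere := by
      rw [← integral_prod_swap]
      exact integral_prod_smul (fun r : Ioi (0 : ℝ) ↦ (r : ℝ) ^ k * h r)
        fun ω : sphere (0 : E) 1 ↦ g ω
    _ = _ := by
      simp only [Measure.volumeIoiPow, ENNReal.ofReal]
      rw [integral_withDensity_eq_integral_smul (by fun_prop),
        integral_subtype_comap measurableSet_Ioi
          fun r ↦ Real.toNNReal (r ^ (finrank ℝ E - 1)) • (r ^ k * h r)]
      congr 1
      refine setIntegral_congr_fun measurableSet_Ioi fun r hr ↦ ?_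
      have := finrank_pos (R := ℝ) (M := E)
      rw [NNReal.smul_def, coe_toNNReal _ (pow_nonneg hr.out.le _), smul_eq_mul, ← mul_assoc,
        ← pow_add, show k + finrank ℝ E - 1 = finrank ℝ E - 1 + k by lia]

theorem integral_Ioi_pow_mul_exp_neg_sq (k : ℕ) :
    ∫ r in Ioi (0 : ℝ), r ^ k * exp (-r ^ 2) = Gamma ((k + 1) / 2) / 2 := by
  have h := integral_rpow_mul_exp_neg_rpow (p := 2) (q := k) two_pos
    (neg_one_lt_zero.trans_le k.cast_nonneg)
  simp only [rpow_natCast, rpow_two] at h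
  rw [h, one_div_mul_eq_div]

theorem setIntegral_ball_of_homogeneous (hg : ∀ r > (0 : ℝ), ∀ x, g (r • x) = r ^ k • g x)
    {R : ℝ} (hR : 0 ≤ R) :
    ∫ x in ball 0 R, g x ∂μ = (R ^ (k + finrank ℝ E) / Gamma ((k + finrank ℝ E) / 2 + 1)) •
      ∫ x, exp (-‖x‖ ^ 2) • g x ∂μ := by
  obtain ⟨N, hN⟩ : ∃ N, k + finrank ℝ E = N + 1 :=
    Nat.exists_eq_add_one.2 (Nat.add_pos_right k finrank_pos)
  have hNk : (k + finrank ℝ E : ℝ) = N + 1 := mod_cast hN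
  have ball_radial : ∫ r in Ioi (0 : ℝ), r ^ N * (Iio R).indicator 1 r =
      R ^ (N + 1) / (N + 1) := by
    simp_rw [← indicator_mul_right (Iio R) (fun r : ℝ ↦ r ^ N), Pi.one_apply, mul_one]
    rw [setIntegral_indicator measurableSet_Iio, Ioi_inter_Iio, ← integral_Ioc_eq_integral_Ioo,
      ← intervalIntegral.integral_of_le hR, integral_pow, zero_pow N.succ_ne_zero, sub_zero]
  have ball_eq : ∫ x in ball 0 R, g x ∂μ = ∫ x, (Iio R).indicator (1 : ℝ → ℝ) ‖x‖ • g x ∂μ := by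
    rw [← integral_indicator measurableSet_ball]
    congr with x
    simp [indicator]
  rw [ball_eq, integral_fun_norm_smul_homogeneous μ hg,
    integral_fun_norm_smul_homogeneous μ hg fun r ↦ exp (-r ^ 2), hN, Nat.add_sub_cancel,
    ball_radial, integral_Ioi_pow_mul_exp_neg_sq, smul_smul, hNk, Gamma_add_one (by positivity)]
  congr 1
  field_simp [(Gamma_pos_of_pos (by positivity : 0 < ((N : ℝ) + 1) / 2)).ne']

end Homogeneous

section GaussianMoments

variable {V : Type*} [NormedAddCommGroup V] [InnerProductSpace ℝ V] [FiniteDimensional ℝ V]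
  [MeasurableSpace V] [BorelSpace V]

theorem Gamma_nat_add_half_eq_factorial_div (m : ℕ) :
    Gamma (m + 1 / 2) = (2 * m).factorial * √π / (2 ^ (2 * m) * m.factorial) := by
  have duplication := Gamma_mul_Gamma_add_half (m + 1 / 2)
  rw [show (m : ℝ) + 1 / 2 + 1 / 2 = m + 1 by ring, Gamma_nat_eq_factorial,
    show 2 * ((m : ℝ) + 1 / 2) = (2 * m : ℕ) + 1 by push_cast; ring, Gamma_nat_eq_factorial,
    sub_add_cancel_right, rpow_neg two_pos.le, rpow_natCast] at duplication
  rw [eq_div_iff (by positivity), mul_left_comm, duplication]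
  field_simp

theorem integral_even_pow_mul_exp_neg_sq (m : ℕ) :
    ∫ t : ℝ, t ^ (2 * m) * exp (-t ^ 2) = Gamma (m + 1 / 2) := by
  have even_integrand (t : ℝ) : t ^ (2 * m) * exp (-t ^ 2) = |t| ^ (2 * m) * exp (-|t| ^ 2) := by
    rw [(even_two_mul m).pow_abs, sq_abs]
  rw [funext even_integrand, integral_comp_abs (f := fun t ↦ t ^ (2 * m) * exp (-t ^ 2)),
    integral_Ioi_pow_mul_exp_neg_sq, mul_div_cancel₀ _ two_ne_zero]
  push_cast
  ring_nf

theorem integral_prod_inner_orthonormalBasis {ι 𝕜 : Type*} [Fintype ι] [RCLike 𝕜]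
    (b : OrthonormalBasis ι ℝ V) (f : ι → ℝ → 𝕜) :
    ∫ x, ∏ i, f i ⟪b i, x⟫_ℝ = ∏ i, ∫ t, f i t := by
  simp_rw [← b.repr_apply_apply]
  rw [b.measurePreserving_repr.integral_comp b.repr.toHomeomorph.measurableEmbedding
      fun y : EuclideanSpace ℝ ι ↦ ∏ i, f i (y i),
    ← (PiLp.volume_preserving_toLp ι).integral_comp
      (MeasurableEquiv.toLp 2 _).measurableEmbedding,
    integral_fintype_prod_volume_eq_prod]

theorem integral_comp_inner_mul_exp_neg_norm_sq {e : V} (he : ‖e‖ = 1) (f : ℝ → ℝ) :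
    ∫ x, f ⟪e, x⟫_ℝ * exp (-‖x‖ ^ 2) = (∫ t, f t * exp (-t ^ 2)) * √π ^ (finrank ℝ V - 1) := by
  classical
  obtain ⟨u, b, heu, hb⟩ := Orthonormal.exists_orthonormalBasis_extension
    (𝕜 := ℝ) (v := {e}) (by simp [orthonormal_subsingleton_iff, he])
  let i : u := ⟨e, heu rfl⟩
  have factor (x : V) : f ⟪e, x⟫_ℝ * exp (-‖x‖ ^ 2) =
      ∏ j, (if j = i then f ⟪b j, x⟫_ℝ else 1) * exp (-⟪b j, x⟫_ℝ ^ 2) := by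
    rw [Finset.prod_mul_distrib, ← exp_sum, ← b.sum_sq_inner_left x, Finset.sum_neg_distrib]
    simp [hb, i, real_inner_comm]
  have orthogonal_factor (j : u) (hj : j ∈ Finset.univ.erase i) :
      ∫ t, (if j = i then f t else 1) * exp (-t ^ 2) = √π := by
    simpa [Finset.ne_of_mem_erase hj] using integral_gaussian 1
  simp_rw [factor]
  rw [integral_prod_inner_orthonormalBasis b fun j t ↦ (if j = i then f t else 1) * exp (-t ^ 2),
    ← Finset.mul_prod_erase _ _ (Finset.mem_univ i), Finset.prod_eq_pow_card orthogonal_factor,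
    Finset.card_erase_of_mem (Finset.mem_univ i), Finset.card_univ,
    finrank_eq_card_basis b.toBasis]
  simp only [if_true]

end GaussianMoments

section Ball

variable {V : Type*} [NormedAddCommGroup V] [InnerProductSpace ℝ V] [FiniteDimensional ℝ V]
  [MeasurableSpace V] [BorelSpace V]

theorem volume_real_ball [Nontrivial V] (x : V) {R : ℝ} (hR : 0 ≤ R) :
    volume.real (ball x R) =
      π ^ (finrank ℝ V / 2 : ℝ) * R ^ finrank ℝ V / Gamma (finrank ℝ V / 2 + 1) := by
  have : 0 < Gamma ((finrank ℝ V : ℝ) / 2 + 1) := Gamma_pos_of_pos (by positivity)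
  rw [measureReal_def, InnerProductSpace.volume_ball, ← ENNReal.ofReal_pow hR,
    ← ENNReal.ofReal_mul (by positivity), ENNReal.toReal_ofReal (by positivity),
    rpow_div_two_eq_sqrt _ pi_pos.le, rpow_natCast]
  ring

theorem memLp_indicator_ball (p : ℝ≥0∞) (R : ℝ) :
    MemLp ((ball (0 : V) R).indicator (1 : V → ℝ)) p :=
  memLp_indicator_const p measurableSet_ball 1 (.inr measure_ball_lt_top.ne)

theorem setIntegral_ball_inner_pow [Nontrivial V] {e : V} (he : ‖e‖ = 1) {R : ℝ} (hR : 0 ≤ R)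
    (m : ℕ) :
    ∫ x in ball 0 R, ⟪e, x⟫_ℝ ^ (2 * m) =
      (2 * m).factorial * √π ^ finrank ℝ V * R ^ (2 * m + finrank ℝ V) /
        (2 ^ (2 * m) * m.factorial * Gamma (m + finrank ℝ V / 2 + 1)) := by
  have homogeneous (r : ℝ) (_ : r > 0) (x : V) :
      ⟪e, r • x⟫_ℝ ^ (2 * m) = r ^ (2 * m) • ⟪e, x⟫_ℝ ^ (2 * m) := by
    rw [inner_smul_right, mul_pow, smul_eq_mul]
  rw [setIntegral_ball_of_homogeneous volume homogeneous hR]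
  simp_rw [smul_eq_mul, mul_comm (exp _)]
  rw [integral_comp_inner_mul_exp_neg_norm_sq he (· ^ (2 * m)), integral_even_pow_mul_exp_neg_sq,
    Gamma_nat_add_half_eq_factorial_div, ← Nat.sub_add_cancel (finrank_pos (R := ℝ) (M := V)),
    pow_succ √π, Nat.cast_mul, Nat.cast_two, add_div, mul_div_cancel_left₀ _ two_ne_zero]
  simp only [Nat.add_sub_cancel]
  field_simp

theorem hasSum_integral_cos {α : Type*} [MeasurableSpace α] {μ : Measure α} [IsFiniteMeasure μ]
    {X : α → ℝ} (hX : AEStronglyMeasurable X μ) {C : ℝ} (hC : ∀ᵐ a ∂μ, |X a| ≤ C) :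
    HasSum (fun m : ℕ ↦ (-1) ^ m / (2 * m).factorial * ∫ a, X a ^ (2 * m) ∂μ)
      (∫ a, cos (X a) ∂μ) := by
  have h := hasSum_integral_of_dominated_convergence (μ := μ) (f := fun a ↦ cos (X a))
    (F := fun (m : ℕ) a ↦ (-1) ^ m / (2 * m).factorial * X a ^ (2 * m))
    (fun m _ ↦ C ^ (2 * m) / (2 * m).factorial) (fun m ↦ (hX.pow _).const_mul _)
    (fun m ↦ hC.mono fun a ha ↦ ?_) (.of_forall fun _ ↦ ?_) (integrable_const _)
    (.of_forall fun a ↦ ?_)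
  · simpa only [integral_const_mul] using h
  · rw [norm_mul, norm_div, norm_pow, norm_pow, norm_neg, norm_one, one_pow, RCLike.norm_natCast,
      one_div_mul_eq_div, norm_eq_abs]
    gcongr
  · exact (summable_pow_div_factorial C).comp_injective (mul_right_injective₀ two_ne_zero)
  · simpa only [div_mul_eq_mul_div] using hasSum_cos (X a)

theorem setIntegral_ball_cos_inner [Nontrivial V] {e : V} (he : ‖e‖ = 1) {R s : ℝ} (hR : 0 < R)
    (hs : 0 < s) :
    ∫ x in ball 0 R, cos (s * ⟪e, x⟫_ℝ) =
      (2 * π * R / s) ^ (finrank ℝ V / 2 : ℝ) * besselJ (finrank ℝ V / 2) (s * R) := by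
  have bound : ∀ᵐ x ∂volume.restrict (ball (0 : V) R), |s * ⟪e, x⟫_ℝ| ≤ s * R := by
    filter_upwards [ae_restrict_mem measurableSet_ball] with x hx
    rw [abs_mul, abs_of_pos hs]
    gcongr
    calc |⟪e, x⟫_ℝ| ≤ ‖e‖ * ‖x‖ := abs_real_inner_le_norm e x
      _ ≤ R := by rw [he, one_mul]; exact (mem_ball_zero_iff.1 hx).le
  have : Fact (volume (ball (0 : V) R) < ∞) := ⟨measure_ball_lt_top⟩
  rw [← (hasSum_integral_cos (Continuous.aestronglyMeasurable (by fun_prop)) bound).tsum_eq,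
    besselJ, ← tsum_mul_left]
  congr with m
  have prefactor : (2 * π * R / s) ^ (finrank ℝ V / 2 : ℝ) * (s * R / 2) ^ (finrank ℝ V / 2 : ℝ) =
      √π ^ finrank ℝ V * R ^ finrank ℝ V := by
    rw [← mul_rpow (by positivity) (by positivity),
      show 2 * π * R / s * (s * R / 2) = π * R ^ 2 by field_simp,
      rpow_div_two_eq_sqrt _ (by positivity), rpow_natCast,
      sqrt_mul pi_pos.le, sqrt_sq hR.le, mul_pow]
  simp_rw [mul_pow s]
  rw [integral_const_mul, setIntegral_ball_inner_pow he hR.le]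
  calc
    _ = (-1) ^ m / (m.factorial * Gamma (m + finrank ℝ V / 2 + 1)) * (s * R / 2) ^ (2 * m) *
        (√π ^ finrank ℝ V * R ^ finrank ℝ V) := by
      rw [div_pow, mul_pow, pow_add]
      field_simp
    _ = _ := by
      rw [← prefactor, rpow_add (by positivity), ← Nat.cast_two, ← Nat.cast_mul, rpow_natCast]
      ring

theorem fourier_indicator_ball [Nontrivial V] {R : ℝ} (hR : 0 < R) {ξ : V} (hξ : ξ ≠ 0) :
    𝓕 (fun x ↦ (((ball (0 : V) R).indicator 1 x : ℝ) : ℂ)) ξ =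
      ((R / ‖ξ‖) ^ (finrank ℝ V / 2 : ℝ) * besselJ (finrank ℝ V / 2) (2 * π * R * ‖ξ‖) : ℝ) := by
  have : 0 < ‖ξ‖ := norm_pos_iff.2 hξ
  have he : ‖‖ξ‖⁻¹ • ξ‖ = 1 := norm_smul_inv_norm (𝕜 := ℝ) hξ
  have inner_eq (x : V) : 2 * π * ⟪x, ξ⟫_ℝ = 2 * π * ‖ξ‖ * ⟪‖ξ‖⁻¹ • ξ, x⟫_ℝ := by
    rw [real_inner_smul_left, real_inner_comm]
    field_simp
  rw [fourier_ofReal_of_even (memLp_one_iff_integrable.1 (memLp_indicator_ball 1 R))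
    fun x ↦ by simp [indicator]]
  simp_rw [inner_eq,
    ← indicator_mul_right (ball (0 : V) R) (fun x ↦ cos (2 * π * ‖ξ‖ * ⟪‖ξ‖⁻¹ • ξ, x⟫_ℝ)),
    Pi.one_apply, mul_one]
  rw [integral_indicator measurableSet_ball, setIntegral_ball_cos_inner he hR (by positivity),
    mul_div_mul_left _ _ two_pi_pos.ne', mul_right_comm (2 * π)]

theorem integral_div_norm_rpow_mul_comp_norm_pow [Nontrivial V] {R : ℝ} (hR : 0 < R) (J : ℝ → ℝ)
    (n : ℕ) :
    ∫ ξ : V, ((R / ‖ξ‖) ^ (finrank ℝ V / 2 : ℝ) * J (2 * π * R * ‖ξ‖)) ^ n =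
      finrank ℝ V * volume.real (ball (0 : V) 1) * (2 * π) ^ (finrank ℝ V * (n / 2 - 1) : ℝ) *
        R ^ (finrank ℝ V * (n - 1) : ℝ) *
        ∫ x in Ioi (0 : ℝ), x ^ (-1 - finrank ℝ V * (n / 2 - 1) : ℝ) * J x ^ n := by
  have hc : 0 < 2 * π * R := by positivity
  rw [integral_fun_norm_addHaar volume
    fun r ↦ ((R / r) ^ (finrank ℝ V / 2 : ℝ) * J (2 * π * R * r)) ^ n]
  set d := finrank ℝ V
  set a : ℝ := d * (n / 2 - 1)
  have radial {r : ℝ} (hr : 0 < r) :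
      r ^ (d - 1) * ((R / r) ^ (d / 2 : ℝ) * J (2 * π * R * r)) ^ n =
        (2 * π) ^ a * R ^ (d * (n - 1) : ℝ) *
          ((2 * π * R) * ((2 * π * R * r) ^ (-1 - a) * J (2 * π * R * r) ^ n)) := by
    have hd : 1 ≤ d := finrank_pos
    have powers_of_R : R ^ (d * (n - 1) : ℝ) = R ^ (d / 2 * n : ℝ) * R ^ a := by
      rw [← rpow_add hR]
      congr 1
      ring
    have powers_of_r : (r ^ (d - 1) : ℝ) = r ^ (-1 - a) * r ^ (d / 2 * n : ℝ) := by
      rw [← rpow_add hr, ← rpow_natCast, Nat.cast_sub hd]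
      congr 1
      simp only [a]
      push_cast
      ring
    rw [mul_pow, ← rpow_mul_natCast (by positivity), div_rpow hR.le hr.le, powers_of_r, powers_of_R,
      mul_rpow hc.le hr.le, rpow_sub hc, rpow_neg_one, mul_rpow two_pi_pos.le hR.le]
    field_simp
  simp only [nsmul_eq_mul, smul_eq_mul]
  rw [setIntegral_congr_fun measurableSet_Ioi fun r hr ↦ radial hr, integral_const_mul,
    integral_const_mul, ← smul_eq_mul (2 * π * R),
    integral_comp_mul_left_Ioi' (fun x ↦ x ^ (-1 - a) * J x ^ n) 0 hc, mul_zero]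
  ring

end Ball

section EuclideanBall

variable {d : ℕ} {R : ℝ}

theorem volume_real_ball_eq_one (hd : 0 < d) :
    volume.real (ball (0 : EuclideanSpace ℝ (Fin d))
      (π ^ (-(1 : ℝ) / 2) * Gamma (d / 2 + 1) ^ (1 / d : ℝ))) = 1 := by
  have : NeZero d := ⟨hd.ne'⟩
  have hΓ : 0 < Gamma ((d : ℝ) / 2 + 1) := Gamma_pos_of_pos (by positivity)
  rw [volume_real_ball _ (by positivity), finrank_euclideanSpace_fin, mul_pow, one_div,
    rpow_inv_natCast_pow hΓ.le hd.ne', ← rpow_mul_natCast pi_pos.le, ← mul_assoc,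
    ← rpow_add pi_pos, div_mul_eq_mul_div, neg_one_mul, neg_div, add_neg_cancel, rpow_zero,
    one_mul, div_self hΓ.ne']

theorem iterConv_indicator_ball_zero (hd : 0 < d) (hR : 0 < R) (k : ℕ) :
    iterConv ((ball (0 : EuclideanSpace ℝ (Fin d)) R).indicator 1) (k + 1) 0 =
      ∫ ξ : EuclideanSpace ℝ (Fin d),
        ((R / ‖ξ‖) ^ (d / 2 : ℝ) * besselJ (d / 2) (2 * π * R * ‖ξ‖)) ^ (k + 2) := by
  have : NeZero d := ⟨hd.ne'⟩
  rw [← Complex.ofReal_inj, iterConv_zero_eq_integral_fourier_pow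
    (memLp_one_iff_integrable.1 (memLp_indicator_ball 1 R)) (memLp_indicator_ball ∞ R),
    ← integral_complex_ofReal]
  refine integral_congr_ae ((Measure.ae_ne volume 0).mono fun ξ hξ ↦ ?_)
  simp only [fourier_indicator_ball hR hξ, finrank_euclideanSpace_fin, Complex.ofReal_pow]

theorem stmt_17_general (hd : 0 < d) (hR : 0 < R) {n : ℕ} (hn : 2 ≤ n) :
    iterConv ((ball (0 : EuclideanSpace ℝ (Fin d)) R).indicator 1) (n - 1) 0 =
      volume.real (ball (0 : EuclideanSpace ℝ (Fin d)) R) ^ (n - 1) *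
      ((d : ℝ) * (2 : ℝ) ^ ((d : ℝ) * ((n : ℝ) / 2 - 1)) * Gamma ((d : ℝ) / 2 + 1) ^ (n - 2) *
        ∫ x in Ioi (0 : ℝ),
          x ^ (-1 - (d : ℝ) * ((n : ℝ) / 2 - 1)) * besselJ ((d : ℝ) / 2) x ^ n) := by
  have : NeZero d := ⟨hd.ne'⟩
  obtain ⟨k, rfl⟩ := Nat.exists_eq_add_of_le' hn
  have h := integral_div_norm_rpow_mul_comp_norm_pow
    (V := EuclideanSpace ℝ (Fin d)) hR (besselJ (d / 2)) (k + 2)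
  have : 0 < Gamma ((d : ℝ) / 2 + 1) := Gamma_pos_of_pos (by positivity)
  have hπ : π ^ (d / 2 : ℝ) * π ^ (d * ((k + 2 : ℕ) / 2 - 1) : ℝ) =
      (π ^ (d / 2 : ℝ)) ^ (k + 1) := by
    rw [← rpow_mul_natCast pi_pos.le, ← rpow_add pi_pos]
    congr 1
    push_cast
    ring
  have hRd : R ^ (d * ((k + 2 : ℕ) - 1) : ℝ) = (R ^ d) ^ (k + 1) := by
    rw [← pow_mul, ← rpow_natCast]
    congr 1
    push_cast
    ring
  simp only [finrank_euclideanSpace_fin] at h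
  rw [show k + 2 - 1 = k + 1 from rfl, Nat.add_sub_cancel, iterConv_indicator_ball_zero hd hR, h,
    volume_real_ball _ zero_le_one, volume_real_ball _ hR.le]
  simp only [finrank_euclideanSpace_fin, one_pow, mul_one]
  rw [mul_rpow two_pos.le pi_pos.le, hRd, div_pow, mul_pow, ← hπ]
  field_simp
  ring

end EuclideanBall

theorem stmt_17 (d : ℕ) (hd : 0 < d) (R : ℝ)
    (hR : R = π ^ (-(1 : ℝ) / 2) * Real.Gamma ((d : ℝ) / 2 + 1) ^ ((1 : ℝ) / (d : ℝ)))
    (φ : EuclideanSpace ℝ (Fin d) → ℝ)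
    (hφ : φ = fun x => if ‖x‖ < R then 1 else 0)
    (n : ℕ) (hn : 3 ≤ n) :
    iterConv φ (n - 1) 0 =
      (d : ℝ) * (2 : ℝ) ^ ((d : ℝ) * ((n : ℝ) / 2 - 1)) *
        Real.Gamma ((d : ℝ) / 2 + 1) ^ (n - 2) *
        ∫ x in Set.Ioi (0 : ℝ),
          x ^ (-1 - (d : ℝ) * ((n : ℝ) / 2 - 1)) * (besselJ ((d : ℝ) / 2) x) ^ n := by
  have : 0 < Gamma ((d : ℝ) / 2 + 1) := Gamma_pos_of_pos (by positivity)
  have hR0 : 0 < R := by rw [hR]; positivity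
  have hφ_ball : φ = (ball 0 R).indicator 1 := by ext x; simp [hφ, indicator]
  rw [hφ_ball, stmt_17_general hd hR0 (by lia), hR, volume_real_ball_eq_one hd, one_pow, one_mul]
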